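/- arXiv:1304.4477 — 5 statements merged into one kernel-verified Lean document; each statement's English description precedes it below -/
import Mathlib

section
/- Let n ≥ 1, let G be a real symmetric (n+1)×(n+1) matrix with last column g ∈ ℝ^{n+1}, and let J and K be disjoint subsets of {1,…,n}. Then there do not exist vectors a, b ∈ ℝ^n supported on J and vectors a', b' ∈ ℝ^n supported on K such that (a;1) + G(b;0) = 0 and (a';0) + G(b';0) = g simultaneously hold. (In the quantum secret sharing interpretation this says: if the group of players J can perfectly reconstruct the position quadrature of the teleported secret, then the disjoint group K cannot perfectly reconstruct the momentum quadrature, and vice versa.) -/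
open Matrix Finset

/-! The pairs `(x, y)` with `x + G y = 0` form an isotropic subspace for the symplectic form
`x ⬝ᵥ y' - y ⬝ᵥ x'`, because `G` is symmetric. Since `g` is the image under `G` of the last basis
vector, the two reconstruction conditions say that `((a;1), (b;0))` and `((a';0), (b';-1))` lie in
this subspace. But their symplectic product is `-1`: the disjointness of the supports leaves only
the contribution of the last coordinate. -/

theorem dotProduct_eq_dotProduct_of_add_mulVec_eq_zero {ι R : Type*} [Fintype ι]
    [NonUnitalCommRing R] {G : Matrix ι ι R} (hG : G.IsSymm) {x y x' y' : ι → R}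
    (h : x + G *ᵥ y = 0) (h' : x' + G *ᵥ y' = 0) : x ⬝ᵥ y' = y ⬝ᵥ x' := by
  rw [eq_neg_of_add_eq_zero_left h, eq_neg_of_add_eq_zero_left h', neg_dotProduct, dotProduct_neg,
    dotProduct_mulVec, ← mulVec_transpose, hG.eq]

theorem dotProduct_eq_zero_of_disjoint {ι R : Type*} [Fintype ι] [NonUnitalNonAssocSemiring R]
    {s t : Set ι} (hst : Disjoint s t) {x y : ι → R} (hx : ∀ i ∉ s, x i = 0)
    (hy : ∀ i ∉ t, y i = 0) : x ⬝ᵥ y = 0 := by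
  refine Finset.sum_eq_zero fun i _ => ?_
  by_cases hi : i ∈ s
  · rw [hy i (Set.disjoint_left.mp hst hi), mul_zero]
  · rw [hx i hi, zero_mul]

theorem snoc_dotProduct_snoc {n : ℕ} {R : Type*} [NonUnitalNonAssocSemiring R]
    (x y : Fin n → R) (s t : R) :
    (Fin.snoc x s : Fin (n + 1) → R) ⬝ᵥ (Fin.snoc y t : Fin (n + 1) → R) = x ⬝ᵥ y + s * t := by
  simp [dotProduct, Fin.sum_univ_castSucc]

theorem mulVec_snoc {n : ℕ} {ι R : Type*} [NonUnitalCommSemiring R]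
    (M : Matrix ι (Fin (n + 1)) R) (x : Fin n → R) (t : R) :
    M *ᵥ (Fin.snoc x t : Fin (n + 1) → R) =
      M *ᵥ (Fin.snoc x 0 : Fin (n + 1) → R) + t • M.col (Fin.last n) := by
  ext i
  simp [mulVec, dotProduct, Fin.sum_univ_castSucc, mul_comm t]

theorem stmt1_general {n : ℕ} {R : Type*} [CommRing R] [Nontrivial R]
    {G : Matrix (Fin (n + 1)) (Fin (n + 1)) R} (hG : G.IsSymm)
    {J K : Set (Fin n)} (hJK : Disjoint J K) :
    ¬ ∃ (a b a' b' : Fin n → R),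
      (∀ l, l ∉ J → a l = 0) ∧ (∀ l, l ∉ J → b l = 0) ∧
      (∀ l, l ∉ K → a' l = 0) ∧ (∀ l, l ∉ K → b' l = 0) ∧
      Fin.snoc a 1 + G.mulVec (Fin.snoc b 0) = 0 ∧
      Fin.snoc a' 0 + G.mulVec (Fin.snoc b' 0) = (fun i => G i (Fin.last n)) := by
  rintro ⟨a, b, a', b', ha, hb, ha', hb', hposition, hmomentum⟩
  have hmomentum' : Fin.snoc a' 0 + G *ᵥ Fin.snoc b' (-1) = 0 := by
    rw [mulVec_snoc, ← add_assoc, hmomentum, neg_one_smul]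
    exact add_neg_cancel (G.col (Fin.last n))
  have hisotropic := dotProduct_eq_dotProduct_of_add_mulVec_eq_zero hG hposition hmomentum'
  rw [snoc_dotProduct_snoc, snoc_dotProduct_snoc, dotProduct_eq_zero_of_disjoint hJK ha hb',
    dotProduct_eq_zero_of_disjoint hJK hb ha'] at hisotropic
  simp at hisotropic

/-- Let `n ≥ 1`, let `G` be a real symmetric `(n+1) × (n+1)` matrix with last
column `g`, and let `J` and `K` be disjoint subsets of `{1,…,n}`.  Then there do not exist vectors
`a, b ∈ ℝ^n` supported on `J` and vectors `a', b' ∈ ℝ^n` supported on `K` such that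
`(a;1) + G(b;0) = 0` and `(a';0) + G(b';0) = g` simultaneously hold. -/
theorem stmt1 (n : ℕ) (hn : 1 ≤ n)
    (G : Matrix (Fin (n + 1)) (Fin (n + 1)) ℝ) (hG : G.IsSymm)
    (J K : Finset (Fin n)) (hJK : Disjoint J K) :
    ¬ ∃ (a b a' b' : Fin n → ℝ),
      (∀ l, l ∉ J → a l = 0) ∧ (∀ l, l ∉ J → b l = 0) ∧
      (∀ l, l ∉ K → a' l = 0) ∧ (∀ l, l ∉ K → b' l = 0) ∧
      Fin.snoc a 1 + G.mulVec (Fin.snoc b 0) = 0 ∧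
      Fin.snoc a' 0 + G.mulVec (Fin.snoc b' 0) = (fun i => G i (Fin.last n)) :=
  stmt1_general hG (Finset.disjoint_coe.mpr hJK)
end

section
/- Let k and n be integers with 1 ≤ k ≤ n ≤ 2k−1 (equivalently n/2 < k ≤ n), and set m = 2k−1, N = {1,…,m}. Then there exist a real symmetric m×m matrix G with zero diagonal, a vector c ∈ ℝ^m, and a set S ⊆ N with |S| = n such that: (i) for every J ⊆ S with |J| = k there exist vectors a, b ∈ ℝ^m supported on J with a + Gb = 0 and b·c = 1; and (ii) for every J' ⊆ S with |J'| < k there exist no vectors a, b ∈ ℝ^m supported on J' with a + Gb = 0 and b·c = 1. (This is the linear-algebraic content of the statement that any (k,n) threshold protocol of the CPvtC quantum secret sharing scheme with n/2 < k ≤ n can be implemented on a weighted continuous-variable graph state with infinite squeezing.) -/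
open Matrix Finset

/-
Regard the secret as an extra vertex `none` attached to the graph by the weights `c`. A group `J`
reconstructs the secret iff some combination of the columns indexed by `J` vanishes in every row
outside `J` except row `none`, where it equals `1`. Give the edge `i j` the weight
`(x i + x j)⁻¹`, where the `x i` have distinct squares, so that they and their negatives do not
collide. The block with columns in `J` and rows outside `J` misses the diagonal, so it is a Cauchy
matrix and has maximal rank. It has `#J` columns and `#Jᶜ + 1` rows. If `#J > #Jᶜ` its rows are
independent and the system is solvable; otherwise the rows other than `none` already force the
combination to be trivial. So exactly the strict majorities reconstruct the secret, and among
`2 * k - 1` players these are the groups of at least `k`.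
-/

section Cauchy

variable {m n K : Type*} [Field K]

lemma mulVec_surjective_of_linearIndependent_row [Finite m] [Fintype n] {A : Matrix m n K}
    (hA : LinearIndependent K A.row) : Function.Surjective A.mulVec := by
  cases nonempty_fintype m
  rw [← coe_mulVecLin, ← LinearMap.range_eq_top]
  refine Submodule.eq_top_of_finrank_eq ?_
  rw [Module.finrank_fintype_fun_eq_card]
  exact hA.rank_matrix

lemma eval_interpolate_div_nodalWeight {ι : Type*} [DecidableEq ι] {s : Finset ι} {v : ι → K}
    (hv : Set.InjOn v s) {z : K} (hz : ∀ i ∈ s, z ≠ v i) (a : ι → K) :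
    (Lagrange.interpolate s v fun i ↦ a i / Lagrange.nodalWeight s v i).eval z =
      (Lagrange.nodal s v).eval z * ∑ i ∈ s, (z - v i)⁻¹ * a i := by
  rw [Lagrange.eval_interpolate_not_at_node _ hz]
  congr 1
  refine sum_congr rfl fun i hi ↦ ?_
  rw [mul_right_comm, mul_div_cancel₀ _ (Lagrange.nodalWeight_ne_zero hv hi), mul_comm]

/-- The Cauchy matrix with entries `1 / (x i + y j)`, whose rectangular blocks provide the
full-rank linear systems. The sign convention makes it symmetric when `x = y`. -/
def cauchyMatrix (x : m → K) (y : n → K) : Matrix m n K :=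
  of fun i j ↦ (x i + y j)⁻¹

lemma transpose_cauchyMatrix (x : m → K) (y : n → K) :
    (cauchyMatrix x y)ᵀ = cauchyMatrix y x := by
  ext i j
  simp only [cauchyMatrix, transpose_apply, of_apply, add_comm]

variable [Fintype m] [Fintype n] {x : m → K} {y : n → K}

lemma linearIndependent_col_cauchyMatrix (hx : x.Injective) (hy : y.Injective)
    (hxy : ∀ i j, x i + y j ≠ 0) (hnm : Fintype.card n ≤ Fintype.card m) :
    LinearIndependent K (cauchyMatrix x y).col := by
  classical
  rw [← mulVec_injective_iff, ← coe_mulVecLin, injective_iff_map_eq_zero]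
  intro v hv
  have hnodes : Set.InjOn (-y) (univ : Finset n) := (neg_injective.comp hy).injOn
  -- `p` is `∑ j, v j / (X + y j)` with its denominators cleared.
  let r : n → K := fun j ↦ v j / Lagrange.nodalWeight univ (-y) j
  let p : Polynomial K := Lagrange.interpolate univ (-y) r
  have hp_eval (i : m) : p.eval (x i) = 0 := by
    have hsum : ∑ j, (x i - (-y) j)⁻¹ * v j = 0 := by
      simp only [Pi.neg_apply, sub_neg_eq_add]
      exact congrFun hv i
    have hne (j : n) : x i ≠ (-y) j := fun h ↦ hxy i j (eq_neg_iff_add_eq_zero.1 h)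
    rw [eval_interpolate_div_nodalWeight hnodes (fun j _ ↦ hne j), hsum, mul_zero]
  have hp_degree : p.degree < #(univ : Finset m) :=
    (Lagrange.degree_interpolate_lt r hnodes).trans_le (by exact_mod_cast hnm)
  have hp : p = 0 :=
    Polynomial.eq_zero_of_degree_lt_of_eval_index_eq_zero univ hx.injOn hp_degree
      fun i _ ↦ hp_eval i
  ext j
  have hr : r j = 0 := by
    rw [← Lagrange.eval_interpolate_at_node r hnodes (mem_univ j)]
    exact (congrArg _ hp).trans Polynomial.eval_zero
  exact (div_eq_zero_iff.1 hr).resolve_right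
    (Lagrange.nodalWeight_ne_zero hnodes (mem_univ j))

lemma cauchyMatrix_mulVec_surjective (hx : x.Injective) (hy : y.Injective)
    (hxy : ∀ i j, x i + y j ≠ 0) (hmn : Fintype.card m ≤ Fintype.card n) :
    Function.Surjective (cauchyMatrix x y).mulVec := by
  refine mulVec_surjective_of_linearIndependent_row ?_
  rw [← col_transpose, transpose_cauchyMatrix]
  exact linearIndependent_col_cauchyMatrix hy hx (fun j i ↦ by rw [add_comm]; exact hxy i j) hmn

end Cauchy

section Reconstruction

variable {ι R : Type*}

/-- The secret is adjoined to the players as the vertex `none`, so that `A` is the adjacency matrix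
on `Option ι`; this is its block with columns in `J` and rows outside `J`, including `none`. -/
def cutMatrix (A : Matrix (Option ι) (Option ι) R) (J : Finset ι) :
    Matrix (Option {l // l ∉ J}) J R :=
  A.submatrix (Option.map Subtype.val) (some ∘ Subtype.val)

variable [Fintype ι]

lemma submatrix_mulVec_restrict [NonUnitalNonAssocSemiring R] {m : Type*} (A : Matrix m ι R)
    {J : Finset ι} {b : ι → R} (hb : ∀ l, l ∉ J → b l = 0) :
    A.submatrix id Subtype.val *ᵥ J.restrict b = A *ᵥ b := by
  ext i
  calc ∑ j : J, A i j * b j = ∑ j ∈ J, A i j * b j := sum_coe_sort J fun j ↦ A i j * b j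
    _ = ∑ j, A i j * b j :=
      sum_subset (subset_univ J) fun j _ hj ↦ by rw [hb j hj, mul_zero]

/-- Perfect reconstruction: with infinite squeezing, the players in `J` recover the classical
secret, encoded by the weights `c` on the graph state with adjacency matrix `G`. -/
def CanReconstruct [Semiring R] (G : Matrix ι ι R) (c : ι → R) (J : Finset ι) : Prop :=
  ∃ a b : ι → R, (∀ l, l ∉ J → a l = 0) ∧ (∀ l, l ∉ J → b l = 0) ∧
    a + G.mulVec b = 0 ∧ b ⬝ᵥ c = 1

lemma canReconstruct_iff_exists_supported [Ring R] {G : Matrix ι ι R} {c : ι → R}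
    {J : Finset ι} :
    CanReconstruct G c J ↔ ∃ b : ι → R, (∀ l, l ∉ J → b l = 0) ∧
      (∀ l, l ∉ J → (G *ᵥ b) l = 0) ∧ b ⬝ᵥ c = 1 := by
  constructor
  · rintro ⟨a, b, ha, hb, hab, hbc⟩
    refine ⟨b, hb, fun l hl ↦ ?_, hbc⟩
    rw [← neg_eq_of_add_eq_zero_right hab, Pi.neg_apply, ha l hl, neg_zero]
  · rintro ⟨b, hb, hGb, hbc⟩
    exact ⟨-(G *ᵥ b), b, fun l hl ↦ by rw [Pi.neg_apply, hGb l hl, neg_zero], hb,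
      neg_add_cancel _, hbc⟩

lemma cutMatrix_mulVec_restrict_eq_single_iff [DecidableEq ι] [CommSemiring R]
    {A : Matrix (Option ι) (Option ι) R} {J : Finset ι} {b : ι → R}
    (hb : ∀ l, l ∉ J → b l = 0) :
    cutMatrix A J *ᵥ J.restrict b = Pi.single none 1 ↔
      (∀ l, l ∉ J → (A.submatrix some some *ᵥ b) l = 0) ∧ b ⬝ᵥ (A none ∘ some) = 1 := by
  have hcut : cutMatrix A J *ᵥ J.restrict b =
      A.submatrix (Option.map Subtype.val) some *ᵥ b :=
    submatrix_mulVec_restrict (A.submatrix (Option.map Subtype.val) some) hb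
  rw [hcut, funext_iff, Option.forall, Pi.single_eq_same, dotProduct_comm, and_comm,
    Subtype.forall]
  rfl

lemma canReconstruct_iff_exists_cutMatrix_mulVec [DecidableEq ι] [CommRing R]
    {A : Matrix (Option ι) (Option ι) R} {J : Finset ι} :
    CanReconstruct (A.submatrix some some) (A none ∘ some) J ↔
      ∃ v : J → R, cutMatrix A J *ᵥ v = Pi.single none 1 := by
  rw [canReconstruct_iff_exists_supported]
  constructor
  · rintro ⟨b, hb, hAb⟩
    exact ⟨J.restrict b, (cutMatrix_mulVec_restrict_eq_single_iff hb).2 hAb⟩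
  · rintro ⟨v, hv⟩
    let b : ι → R := Function.extend Subtype.val v 0
    have hb : ∀ l, l ∉ J → b l = 0 := fun l hl ↦
      Function.extend_apply' _ _ _ fun ⟨j, hj⟩ ↦ hl (hj ▸ j.2)
    have hbv : J.restrict b = v := Function.extend_comp Subtype.val_injective v 0
    exact ⟨b, hb, (cutMatrix_mulVec_restrict_eq_single_iff hb).1 (hbv.symm ▸ hv)⟩

end Reconstruction

section DistinctSquares

lemma add_ne_zero_of_injective_sq {ι R : Type*} [Ring R] {x : ι → R}
    (hx : Function.Injective fun i ↦ x i ^ 2) {i j : ι} (hij : i ≠ j) : x i + x j ≠ 0 := fun h ↦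
  hij (hx (by simp only [eq_neg_of_add_eq_zero_left h, neg_sq]))

variable (R : Type*) [CommRing R] [NoZeroDivisors R] [Infinite R]

lemma infinite_range_sq : (Set.range fun z : R ↦ z ^ 2).Infinite := by
  rw [← Set.image_univ]
  refine fun h ↦ Set.infinite_univ (Set.Finite.of_finite_fibers _ h ?_)
  rintro _ ⟨z, -, rfl⟩
  exact (Set.toFinite {z, -z}).subset fun w hw ↦ sq_eq_sq_iff_eq_or_eq_neg.1 hw.2

lemma exists_injective_sq (ι : Type*) [Countable ι] :
    ∃ x : ι → R, Function.Injective fun i ↦ x i ^ 2 := by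
  obtain ⟨f, hf⟩ := Countable.exists_injective_nat ι
  let e := (infinite_range_sq R).natEmbedding
  choose z hz using fun n ↦ (e n).2
  refine ⟨z ∘ f, fun i j hij ↦ hf (e.injective (Subtype.ext ?_))⟩
  rw [← hz, ← hz]
  exact hij

end DistinctSquares

section HollowCauchy

variable {ι K : Type*} [DecidableEq ι] [Field K]

/-- The adjacency matrix of the complete graph whose edge `i j` has weight `1 / (x i + x j)`: the
symmetric Cauchy matrix with its diagonal replaced by `0`. -/
def hollowCauchy (x : ι → K) : Matrix ι ι K :=
  of fun i j ↦ if i = j then 0 else (x i + x j)⁻¹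

lemma hollowCauchy_isSymm (x : ι → K) : (hollowCauchy x).IsSymm := by
  ext i j
  simp only [hollowCauchy, transpose_apply, of_apply, eq_comm, add_comm]

lemma hollowCauchy_apply_self (x : ι → K) (i : ι) : hollowCauchy x i i = 0 :=
  if_pos rfl

lemma hollowCauchy_submatrix {m n : Type*} (x : ι → K) {f : m → ι} {g : n → ι}
    (hfg : ∀ i j, f i ≠ g j) :
    (hollowCauchy x).submatrix f g = cauchyMatrix (x ∘ f) (x ∘ g) := by
  ext i j
  exact if_neg (hfg i j)

section Submatrix

variable {m n : Type*} [Fintype m] [Fintype n] {x : ι → K} {f : m → ι} {g : n → ι}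

lemma hollowCauchy_submatrix_mulVec_injective (hx : Function.Injective fun i ↦ x i ^ 2)
    (hf : f.Injective) (hg : g.Injective) (hfg : ∀ i j, f i ≠ g j)
    (hnm : Fintype.card n ≤ Fintype.card m) :
    Function.Injective ((hollowCauchy x).submatrix f g).mulVec := by
  have hx_inj : x.Injective := hx.of_comp (f := (· ^ 2))
  rw [hollowCauchy_submatrix x hfg, mulVec_injective_iff]
  exact linearIndependent_col_cauchyMatrix (hx_inj.comp hf) (hx_inj.comp hg)
    (fun i j ↦ add_ne_zero_of_injective_sq hx (hfg i j)) hnm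

lemma hollowCauchy_submatrix_mulVec_surjective (hx : Function.Injective fun i ↦ x i ^ 2)
    (hf : f.Injective) (hg : g.Injective) (hfg : ∀ i j, f i ≠ g j)
    (hmn : Fintype.card m ≤ Fintype.card n) :
    Function.Surjective ((hollowCauchy x).submatrix f g).mulVec := by
  have hx_inj : x.Injective := hx.of_comp (f := (· ^ 2))
  rw [hollowCauchy_submatrix x hfg]
  exact cauchyMatrix_mulVec_surjective (hx_inj.comp hf) (hx_inj.comp hg)
    (fun i j ↦ add_ne_zero_of_injective_sq hx (hfg i j)) hmn

end Submatrix

end HollowCauchy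

section Threshold

variable {ι K : Type*} [Fintype ι] [DecidableEq ι] [Field K]

lemma eq_zero_of_cutMatrix_hollowCauchy_mulVec_some {x : Option ι → K}
    (hx : Function.Injective fun i ↦ x i ^ 2) {J : Finset ι} (hJ : 2 * #J ≤ Fintype.card ι)
    {v : J → K} (hv : ∀ l, (cutMatrix (hollowCauchy x) J *ᵥ v) (some l) = 0) : v = 0 := by
  let rowIndex : {l // l ∉ J} → Option ι := some ∘ Subtype.val
  let colIndex : J → Option ι := some ∘ Subtype.val
  have hdisjoint (l : {l // l ∉ J}) (j : J) : rowIndex l ≠ colIndex j := fun h ↦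
    l.2 (Option.some_injective ι h ▸ j.2)
  have hcard : Fintype.card J ≤ Fintype.card {l // l ∉ J} := by
    rw [Fintype.card_subtype_compl, Fintype.card_coe]
    omega
  have hinj : Function.Injective ((hollowCauchy x).submatrix rowIndex colIndex).mulVec :=
    hollowCauchy_submatrix_mulVec_injective hx
      ((Option.some_injective ι).comp Subtype.val_injective)
      ((Option.some_injective ι).comp Subtype.val_injective) hdisjoint hcard
  exact hinj ((funext hv).trans (mulVec_zero _).symm)

lemma cutMatrix_hollowCauchy_mulVec_surjective {x : Option ι → K}
    (hx : Function.Injective fun i ↦ x i ^ 2) {J : Finset ι} (hJ : Fintype.card ι < 2 * #J) :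
    Function.Surjective (cutMatrix (hollowCauchy x) J).mulVec := by
  refine hollowCauchy_submatrix_mulVec_surjective hx (Option.map_injective Subtype.val_injective)
    ((Option.some_injective ι).comp Subtype.val_injective) (fun l j h ↦ ?_) ?_
  · obtain ⟨i, -, hij⟩ := Option.map_eq_some_iff.1 h
    exact i.2 (hij ▸ j.2)
  · rw [Fintype.card_option, Fintype.card_subtype_compl, Fintype.card_coe]
    omega

lemma canReconstruct_hollowCauchy_iff {x : Option ι → K}
    (hx : Function.Injective fun i ↦ x i ^ 2) {J : Finset ι} :
    CanReconstruct ((hollowCauchy x).submatrix some some) (hollowCauchy x none ∘ some) J ↔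
      Fintype.card ι < 2 * #J := by
  rw [canReconstruct_iff_exists_cutMatrix_mulVec]
  refine ⟨?_, fun hJ ↦ cutMatrix_hollowCauchy_mulVec_surjective hx hJ _⟩
  rintro ⟨v, hv⟩
  by_contra! hJ
  have hv_zero : v = 0 := eq_zero_of_cutMatrix_hollowCauchy_mulVec_some hx hJ fun l ↦ by
    rw [hv, Pi.single_eq_of_ne (Option.some_ne_none l)]
  have hnone := congrFun hv none
  rw [hv_zero, mulVec_zero, Pi.zero_apply, Pi.single_eq_same] at hnone
  exact zero_ne_one hnone

end Threshold

theorem stmt2_general (ι K : Type*) [Fintype ι] [Field K] [Infinite K] :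
    ∃ (G : Matrix ι ι K) (c : ι → K), G.IsSymm ∧ (∀ i, G i i = 0) ∧
      ∀ J : Finset ι, CanReconstruct G c J ↔ Fintype.card ι < 2 * #J := by
  classical
  obtain ⟨x, hx⟩ := exists_injective_sq K (Option ι)
  exact ⟨_, _, (hollowCauchy_isSymm x).submatrix some, fun i ↦ hollowCauchy_apply_self x (some i),
    fun _ ↦ canReconstruct_hollowCauchy_iff hx⟩

/-- Let `1 ≤ k ≤ n ≤ 2k − 1` and set `m = 2k − 1`.  Then there exist a real
symmetric `m × m` matrix `G` with zero diagonal, a vector `c ∈ ℝ^m`, and a set `S ⊆ {1,…,m}` with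
`|S| = n` such that: (i) every `J ⊆ S` with `|J| = k` admits vectors `a, b ∈ ℝ^m` supported on `J`
with `a + G b = 0` and `b ⬝ c = 1`; and (ii) no `J' ⊆ S` with `|J'| < k` admits such vectors. -/
theorem stmt2 (k n : ℕ) (hk : 1 ≤ k) (hkn : k ≤ n) (hn : n ≤ 2 * k - 1) :
    ∃ (G : Matrix (Fin (2 * k - 1)) (Fin (2 * k - 1)) ℝ) (c : Fin (2 * k - 1) → ℝ)
      (S : Finset (Fin (2 * k - 1))),
      G.IsSymm ∧ (∀ i, G i i = 0) ∧ S.card = n ∧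
      (∀ J ⊆ S, J.card = k →
        ∃ a b : Fin (2 * k - 1) → ℝ,
          (∀ l, l ∉ J → a l = 0) ∧ (∀ l, l ∉ J → b l = 0) ∧
          a + G.mulVec b = 0 ∧ b ⬝ᵥ c = 1) ∧
      (∀ J' ⊆ S, J'.card < k →
        ¬ ∃ a b : Fin (2 * k - 1) → ℝ,
          (∀ l, l ∉ J' → a l = 0) ∧ (∀ l, l ∉ J' → b l = 0) ∧
          a + G.mulVec b = 0 ∧ b ⬝ᵥ c = 1) := by
  obtain ⟨G, c, hG_symm, hG_diag, hGc⟩ := stmt2_general (Fin (2 * k - 1)) ℝ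
  obtain ⟨S, -, hS⟩ := exists_subset_card_eq (s := (univ : Finset (Fin (2 * k - 1)))) (n := n)
    (by rwa [card_univ, Fintype.card_fin])
  simp only [Fintype.card_fin] at hGc
  exact ⟨G, c, S, hG_symm, hG_diag, hS, fun J _ hJ ↦ (hGc J).2 (by omega),
    fun J _ hJ h ↦ absurd ((hGc J).1 h) (by omega)⟩
end

section
/- Let G be a real symmetric n×n matrix, c ∈ ℝ^n, J' ⊆ {1,…,n}, and K' = {1,…,n}∖J'. If the rows of the submatrix G_{J',K'} are linearly independent, then there exist no vectors a, b ∈ ℝ^n supported on J' with a + Gb = 0 and b·c = 1. -/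
open Matrix Finset

section MulVec

variable {R l m n : Type*} [CommSemiring R] [Fintype n]

theorem submatrix_mulVec_of_support_subset {J : Finset n} {b : n → R} (hb : ∀ j, j ∉ J → b j = 0)
    (G : Matrix m n R) (r : l → m) :
    G.submatrix r ((↑) : J → n) *ᵥ (fun j => b j) = fun i => (G *ᵥ b) (r i) := by
  funext i
  calc ∑ j : J, G (r i) j * b j
      = ∑ j ∈ J, G (r i) j * b j := sum_coe_sort J fun j => G (r i) j * b j
    _ = ∑ j, G (r i) j * b j :=
        sum_subset (subset_univ J) fun j _ hj => by rw [hb j hj, mul_zero]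

theorem eq_zero_of_mulVec_eq_zero_of_linearIndependent_col {G : Matrix m n R} {r : l → m}
    {J : Finset n} (hcols : LinearIndependent R (G.submatrix r ((↑) : J → n)).col)
    {b : n → R} (hb : ∀ j, j ∉ J → b j = 0) (hGb : ∀ i, (G *ᵥ b) (r i) = 0) : b = 0 := by
  have hbJ : (fun j : J => b j) = 0 := by
    apply mulVec_injective_iff.mpr hcols
    rw [submatrix_mulVec_of_support_subset hb, mulVec_zero]
    exact funext hGb
  funext j
  by_cases hj : j ∈ J
  · exact congrFun hbJ ⟨j, hj⟩
  · exact hb j hj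

end MulVec

theorem stmt3_general {R ι : Type*} [CommSemiring R] [Nontrivial R] [Fintype ι] [DecidableEq ι]
    {G : Matrix ι ι R} (c : ι → R) {J : Finset ι}
    (hcols : LinearIndependent R
      (G.submatrix ((↑) : {i // i ∈ Jᶜ} → ι) ((↑) : {j // j ∈ J} → ι)).col) :
    ¬ ∃ a b : ι → R,
      (∀ l, l ∉ J → a l = 0) ∧ (∀ l, l ∉ J → b l = 0) ∧ a + G *ᵥ b = 0 ∧ b ⬝ᵥ c = 1 := by
  rintro ⟨a, b, ha, hb, hab, hbc⟩
  have hGb (i : {i // i ∈ Jᶜ}) : (G *ᵥ b) i = 0 := by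
    simpa only [Pi.add_apply, Pi.zero_apply, ha i (mem_compl.mp i.2), zero_add]
      using congrFun hab i
  have hb_zero : b = 0 := eq_zero_of_mulVec_eq_zero_of_linearIndependent_col hcols hb hGb
  rw [hb_zero, zero_dotProduct] at hbc
  exact zero_ne_one hbc

/-- Let `G` be a real symmetric `n × n` matrix, `c ∈ ℝ^n`, `J' ⊆ {1,…,n}`, and
`K' = {1,…,n} ∖ J'`.  If the rows of the submatrix `G_{J',K'}` are linearly independent, then
there exist no vectors `a, b ∈ ℝ^n` supported on `J'` with `a + G b = 0` and `b ⬝ c = 1`. -/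
theorem stmt3 (n : ℕ) (hn : 1 ≤ n)
    (G : Matrix (Fin n) (Fin n) ℝ) (hG : G.IsSymm)
    (c : Fin n → ℝ) (J' : Finset (Fin n))
    (hrows : LinearIndependent ℝ
      (fun j : {x // x ∈ J'} => fun i : {x // x ∈ J'ᶜ} => G j.1 i.1)) :
    ¬ ∃ a b : Fin n → ℝ,
      (∀ l, l ∉ J' → a l = 0) ∧ (∀ l, l ∉ J' → b l = 0) ∧
      a + G.mulVec b = 0 ∧ b ⬝ᵥ c = 1 :=
  -- By symmetry the columns of `G_{K',J'}` are the rows of `G_{J',K'}`.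
  stmt3_general c (by rw [← hG.eq]; exact hrows)
end

section
/- Let k ≥ 1, n = 2k−1, and M = {1,…,2k}. Let G be a real symmetric 2k×2k matrix with last column g ∈ ℝ^{2k}, and let J ⊆ {1,…,n} with |J| = k. If the k×k submatrix G_{J,M∖J} is invertible, then there exist vectors a, b ∈ ℝ^n supported on J with (a;1) + G(b;0) = 0, and there exist vectors a', b' ∈ ℝ^n supported on J with (a';0) + G(b';0) = g. -/
open Matrix Finset

/-!
Choose `b` first. In the rows indexed by `J` the equation `(a;t) + G(b;0) = w` merely defines `a`,
so what remains is its restriction to the other rows, where `a` does not occur: a linear system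
for `b` with matrix `G_{M∖J, J}`. By symmetry of `G` this matrix is the transpose of `G_{J, M∖J}`.
-/

section SupportedSolutions

open Function

variable {m ι κ ρ R : Type*}

theorem mulVec_extend_zero [Fintype m] [Fintype κ] [NonUnitalNonAssocSemiring R]
    (A : Matrix ι m R) {c : κ → m} (hc : Injective c) (y : κ → R) :
    A *ᵥ extend c y 0 = A.submatrix id c *ᵥ y := by
  ext i
  refine (Fintype.sum_of_injective c hc _ _ (fun l hl => ?_) fun j => ?_).symm
  · rw [extend_apply' _ _ _ hl, Pi.zero_apply, mul_zero]
  · simp only [hc.extend_apply, submatrix_apply, id]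

theorem mulVec_submatrix_surjective_of_isSymm [Fintype κ] [Finite ρ] [DecidableEq ρ]
    [CommSemiring R] {G : Matrix m m R} (hG : G.IsSymm) {r : ρ → m} {c : κ → m}
    {B : Matrix ρ κ R} (hB : B * G.submatrix c r = 1) : Surjective (G.submatrix r c).mulVec := by
  refine mulVec_surjective_iff_exists_right_inverse.2 ⟨Bᵀ, ?_⟩
  rw [← hG.eq, ← transpose_submatrix, ← transpose_mul, hB, transpose_one]

theorem exists_extend_add_mulVec_eq [Fintype κ] [NonUnitalNonAssocRing R] {A : Matrix m κ R}
    {e : ι → m} (he : Injective e) {r : ρ → m} (hr : ∀ i ∉ Set.range e, i ∈ Set.range r)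
    (hA : Surjective (A.submatrix r id).mulVec) (d w : m → R) :
    ∃ (x : ι → R) (y : κ → R), extend e x d + A *ᵥ y = w := by
  obtain ⟨y, hy⟩ := hA ((w - d) ∘ r)
  refine ⟨(w - A *ᵥ y) ∘ e, y, funext fun i => ?_⟩
  by_cases hi : i ∈ Set.range e
  · obtain ⟨j, rfl⟩ := hi
    rw [Pi.add_apply, he.extend_apply, Function.comp_apply, Pi.sub_apply, sub_add_cancel]
  · obtain ⟨k, rfl⟩ := hr i hi
    have hyk : (A *ᵥ y) (r k) = w (r k) - d (r k) := congrFun hy k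
    rw [Pi.add_apply, extend_apply' _ _ _ hi, hyk, add_sub_cancel]

theorem snoc_extend {α : Type*} {n : ℕ} {f : ι → Fin n} (hf : Injective f) (x : ι → α)
    (d : Fin n → α) (t : α) :
    (Fin.snoc (extend f x d) t : Fin (n + 1) → α) =
      extend (Fin.castSucc ∘ f) x (Fin.snoc d t : Fin (n + 1) → α) := by
  have hcast := Fin.castSucc_injective n
  rw [hf.extend_comp hcast, Fin.snoc_comp_castSucc]
  refine funext <| Fin.lastCases ?_ fun l => ?_
  · rw [Fin.snoc_last, extend_apply' _ _ _ fun ⟨l, hl⟩ => Fin.castSucc_ne_last l hl, Fin.snoc_last]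
  · rw [Fin.snoc_castSucc, hcast.extend_apply]

theorem extend_coe_zero_of_notMem [Zero R] {J : Finset ι} (x : {l // l ∈ J} → R) :
    ∀ l, l ∉ J → extend (↑) x (0 : ι → R) l = 0 :=
  fun _ hl => extend_apply' _ _ _ fun ⟨j, hj⟩ => hl (hj ▸ j.2)

theorem stmt6_general [NonUnitalNonAssocRing R] {n : ℕ}
    {G : Matrix (Fin (n + 1)) (Fin (n + 1)) R} {J : Finset (Fin n)}
    (hG : Surjective (G.submatrix (fun i : {x // x ∈ (J.image Fin.castSucc)ᶜ} => i.1)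
      (fun j : {x // x ∈ J} => j.1.castSucc)).mulVec)
    (t : R) (w : Fin (n + 1) → R) :
    ∃ a b : Fin n → R, (∀ l, l ∉ J → a l = 0) ∧ (∀ l, l ∉ J → b l = 0) ∧
      Fin.snoc a t + G.mulVec (Fin.snoc b 0) = w := by
  let e : {x // x ∈ J} → Fin (n + 1) := Fin.castSucc ∘ (↑)
  have he : Injective e := (Fin.castSucc_injective n).comp Subtype.val_injective
  have hcover : ∀ i ∉ Set.range e,
      i ∈ Set.range fun i : {x // x ∈ (J.image Fin.castSucc)ᶜ} => i.1 := by
    simp [e]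
  obtain ⟨x, y, hxy⟩ :=
    exists_extend_add_mulVec_eq (A := G.submatrix id e) he hcover hG (Fin.snoc 0 t) w
  refine ⟨extend (↑) x 0, extend (↑) y 0, extend_coe_zero_of_notMem x,
    extend_coe_zero_of_notMem y, ?_⟩
  have hsnoc : (Fin.snoc 0 0 : Fin (n + 1) → R) = 0 :=
    funext <| Fin.lastCases (Fin.snoc_last ..) fun l => Fin.snoc_castSucc ..
  rw [snoc_extend Subtype.val_injective, snoc_extend Subtype.val_injective, hsnoc,
    mulVec_extend_zero G he, hxy]

end SupportedSolutions

/-- Let `k ≥ 1`, `n = 2k − 1`, and `M = {1,…,2k}`.  Let `G` be a real symmetric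
`2k × 2k` matrix with last column `g`, and let `J ⊆ {1,…,n}` with `|J| = k`.  If the `k × k`
submatrix `G_{J, M∖J}` is invertible, then there exist vectors `a, b ∈ ℝ^n` supported on `J` with
`(a;1) + G(b;0) = 0`, and there exist vectors `a', b' ∈ ℝ^n` supported on `J` with
`(a';0) + G(b';0) = g`. -/
theorem stmt6 (k n : ℕ) (hk : 1 ≤ k) (hn : n = 2 * k - 1)
    (G : Matrix (Fin (n + 1)) (Fin (n + 1)) ℝ) (hG : G.IsSymm)
    (J : Finset (Fin n)) (hJ : J.card = k)
    (hinv : ∃ B : Matrix {x // x ∈ (J.image Fin.castSucc)ᶜ} {x // x ∈ J} ℝ,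
      (Matrix.of fun (j : {x // x ∈ J}) (i : {x // x ∈ (J.image Fin.castSucc)ᶜ}) =>
          G j.1.castSucc i.1) * B = 1 ∧
      B * (Matrix.of fun (j : {x // x ∈ J}) (i : {x // x ∈ (J.image Fin.castSucc)ᶜ}) =>
          G j.1.castSucc i.1) = 1) :
    (∃ a b : Fin n → ℝ,
        (∀ l, l ∉ J → a l = 0) ∧ (∀ l, l ∉ J → b l = 0) ∧
        Fin.snoc a 1 + G.mulVec (Fin.snoc b 0) = 0) ∧
    (∃ a' b' : Fin n → ℝ,
        (∀ l, l ∉ J → a' l = 0) ∧ (∀ l, l ∉ J → b' l = 0) ∧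
        Fin.snoc a' 0 + G.mulVec (Fin.snoc b' 0) = (fun i => G i (Fin.last n))) := by
  obtain ⟨B, -, hB⟩ := hinv
  have hsurj := mulVec_submatrix_surjective_of_isSymm hG hB
  exact ⟨stmt6_general hsurj 1 0, stmt6_general hsurj 0 _⟩
end

section
/- For every integer k ≥ 1, set N = {1,…,2k−1}. There exists a real symmetric 2k×2k matrix G with zero diagonal and last column g ∈ ℝ^{2k} such that: (i) for every J ⊆ N with |J| = k, there exist a, b ∈ ℝ^{2k−1} supported on J with (a;1) + G(b;0) = 0, and there exist a', b' ∈ ℝ^{2k−1} supported on J with (a';0) + G(b';0) = g; and (ii) for every J' ⊆ N with |J'| < k, there exist no a, b ∈ ℝ^{2k−1} supported on J' with (a;1) + G(b;0) = 0 and no a', b' ∈ ℝ^{2k−1} supported on J' with (a';0) + G(b';0) = g. (This is the linear-algebraic content of the statement that any (k, 2k−1) threshold protocol of the QPvtQ quantum secret sharing scheme can be implemented with a weighted continuous-variable graph state of infinite squeezing, with groups of fewer than k players obtaining no information.) -/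
open Matrix Finset

/-! Take `G` with off-diagonal entries `1 / (x i + x j)`, where the `x i` are distinct and no two of
them sum to zero. A square block of `G` with disjoint row and column sets is a Cauchy matrix, hence
nonsingular. If `a` and `b` are supported on `T`, the rows outside `T` of `a + G b = d` involve `b`
only, and then the rows in `T` determine `a`. So the equation has a solution when `T` contains half
of the vertices, and at most one when `T` contains at most half of them. Recovery takes `T = J`. For
secrecy `T` is `J'` together with the dealer: both forbidden identities are nontrivial solutions of
`a + G b = 0`, the second one after moving `g` to the left as `-1` in the dealer's coordinate of
`b`. -/

section Cauchy

variable {κ K : Type*} [Fintype κ] [Field K]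

-- Up to the factor `∏ j, (x i - y j)`, the sum over `j` is the value at `x i` of the polynomial of
-- degree less than `#κ` that interpolates the rescaled `w` at the nodes `y` (barycentric form).
lemma eq_zero_of_sum_inv_sub_mul_eq_zero {x y w : κ → K} (hx : Function.Injective x)
    (hy : Function.Injective y) (hxy : ∀ i j, x i ≠ y j)
    (hw : ∀ i, ∑ j, (x i - y j)⁻¹ * w j = 0) : w = 0 := by
  classical
  let r : κ → K := fun j => (Lagrange.nodalWeight univ y j)⁻¹ * w j
  have hweight (j : κ) : Lagrange.nodalWeight univ y j ≠ 0 :=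
    Lagrange.nodalWeight_ne_zero hy.injOn (mem_univ j)
  have hroots (i : κ) : (Lagrange.interpolate univ y r).eval (x i) = 0 := by
    rw [Lagrange.eval_interpolate_not_at_node r fun j _ => hxy i j]
    refine mul_eq_zero_of_right _ (Eq.trans (sum_congr rfl fun j _ => ?_) (hw i))
    rw [mul_right_comm, mul_inv_cancel_left₀ (hweight j), mul_comm]
  have hzero : Lagrange.interpolate univ y r = 0 :=
    Polynomial.eq_zero_of_degree_lt_of_eval_index_eq_zero univ hx.injOn
      (Lagrange.degree_interpolate_lt r hy.injOn) fun i _ => hroots i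
  funext j
  have hr : r j = 0 := by
    rw [← Lagrange.eval_interpolate_at_node r hy.injOn (mem_univ j), hzero, Polynomial.eval_zero]
  exact (mul_eq_zero.1 hr).resolve_left (inv_ne_zero (hweight j))

lemma det_inv_sub_ne_zero [DecidableEq κ] {x y : κ → K} (hx : Function.Injective x)
    (hy : Function.Injective y) (hxy : ∀ i j, x i ≠ y j) :
    (of fun i j => (x i - y j)⁻¹).det ≠ 0 := by
  intro hdet
  obtain ⟨w, hw, hker⟩ := exists_mulVec_eq_zero_iff.2 hdet
  exact hw (eq_zero_of_sum_inv_sub_mul_eq_zero hx hy hxy (congrFun hker))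

end Cauchy

lemma submatrix_mulVec_restrict_s16 {R m κ ι : Type*} [NonUnitalNonAssocSemiring R] [Fintype ι]
    (G : Matrix m ι R) {T : Finset ι} {v : ι → R} (hv : ∀ j ∉ T, v j = 0) (r : κ → m) :
    G.submatrix r (Subtype.val : T → ι) *ᵥ (v ∘ Subtype.val) = (G *ᵥ v) ∘ r := by
  funext i
  exact (sum_coe_sort T fun j => G (r i) j * v j).trans
    (sum_subset (subset_univ T) fun j _ hj => by rw [hv j hj, mul_zero])

section Cuts

variable {ι R : Type*} [DecidableEq ι]

/-- A weighted graph has nonsingular cuts if every square block of its adjacency matrix with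
disjoint row and column sets is nonsingular. The block is given by its column set `T` and by a
choice `r` of one row outside `T` for each column. -/
def HasNonsingularCuts [CommRing R] (G : Matrix ι ι R) : Prop :=
  ∀ (T : Finset ι) (r : T ↪ {i // i ∉ T}),
    (G.submatrix (fun t => (r t : ι)) (Subtype.val : T → ι)).det ≠ 0

namespace HasNonsingularCuts

variable [Fintype ι] {T : Finset ι}

lemma eq_zero_of_add_mulVec_eq_zero [CommRing R] [NoZeroDivisors R] {G : Matrix ι ι R}
    (hG : HasNonsingularCuts G) (hT : 2 * #T ≤ Fintype.card ι) {a b : ι → R}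
    (ha : ∀ i ∉ T, a i = 0) (hb : ∀ i ∉ T, b i = 0) (h : a + G *ᵥ b = 0) : a = 0 ∧ b = 0 := by
  obtain ⟨r⟩ : Nonempty (T ↪ {i // i ∉ T}) := Function.Embedding.nonempty_of_card_le <| by
    rw [Fintype.card_subtype_compl, Fintype.card_coe]
    omega
  have hGb (i : ι) (hi : i ∉ T) : (G *ᵥ b) i = 0 := by
    simpa only [Pi.add_apply, Pi.zero_apply, ha i hi, zero_add] using congrFun h i
  have hbT : b ∘ (Subtype.val : T → ι) = 0 := eq_zero_of_mulVec_eq_zero (hG T r) <| by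
    rw [submatrix_mulVec_restrict_s16 G hb]
    exact funext fun t => hGb (r t) (r t).2
  have hb0 : b = 0 := funext fun i =>
    if hi : i ∈ T then congrFun hbT ⟨i, hi⟩ else hb i hi
  exact ⟨by rwa [hb0, mulVec_zero, add_zero] at h, hb0⟩

lemma exists_add_mulVec_eq {K : Type*} [Field K] {G : Matrix ι ι K} (hG : HasNonsingularCuts G)
    (hT : 2 * #T = Fintype.card ι) (d : ι → K) :
    ∃ a b : ι → K, (∀ i ∉ T, a i = 0) ∧ (∀ i ∉ T, b i = 0) ∧ a + G *ᵥ b = d := by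
  obtain ⟨e⟩ : Nonempty (T ≃ {i // i ∉ T}) := Fintype.card_eq.1 <| by
    rw [Fintype.card_subtype_compl, Fintype.card_coe]
    omega
  have hdet := hG T e.toEmbedding
  obtain ⟨w, hw⟩ := mulVec_surjective_iff_isUnit.2
    ((isUnit_iff_isUnit_det _).2 hdet.isUnit) fun t => d (e t)
  let b : ι → K := Function.extend Subtype.val w 0
  have hb (i : ι) (hi : i ∉ T) : b i = 0 :=
    Function.extend_apply' _ _ _ fun ⟨t, ht⟩ => hi (ht ▸ t.2)
  have hbw : b ∘ (Subtype.val : T → ι) = w := Function.extend_comp Subtype.val_injective w 0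
  have hGb : (G *ᵥ b) ∘ (fun t => (e t : ι)) = fun t => d (e t) := by
    rw [← submatrix_mulVec_restrict_s16 G hb, hbw]
    exact hw
  refine ⟨d - G *ᵥ b, b, fun i hi => sub_eq_zero.2 ?_, hb, sub_add_cancel _ _⟩
  simpa using (congrFun hGb (e.symm ⟨i, hi⟩)).symm

end HasNonsingularCuts

end Cuts

section Dealer

variable {R : Type*} {n : ℕ} {J : Finset (Fin n)}

lemma snoc_eq_zero_of_notMem [Zero R] {b : Fin n → R} (hb : ∀ l, l ∉ J → b l = 0) (t : R) :
    ∀ i ∉ insert (Fin.last n) (J.map Fin.castSuccEmb), (Fin.snoc b t : Fin (n + 1) → R) i = 0 := by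
  refine Fin.lastCases (fun hi => absurd (mem_insert_self _ _) hi) fun l hl => ?_
  rw [Fin.snoc_castSucc]
  exact hb l fun hlJ => hl (mem_insert_of_mem (mem_map_of_mem Fin.castSuccEmb hlJ))

lemma snoc_eq_snoc_zero_add_single [AddZeroClass R] (b : Fin n → R) (t : R) :
    (Fin.snoc b t : Fin (n + 1) → R) = Fin.snoc b 0 + Pi.single (Fin.last n) t := by
  funext i
  refine Fin.lastCases ?_ (fun l => ?_) i
  · simp
  · simp [Fin.castSucc_ne_last]

namespace HasNonsingularCuts

lemma exists_snoc_add_mulVec_snoc_zero_eq {K : Type*} [Field K]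
    {G : Matrix (Fin (n + 1)) (Fin (n + 1)) K} (hG : HasNonsingularCuts G)
    (hJ : 2 * #J = n + 1) (t : K) (d : Fin (n + 1) → K) :
    ∃ a b : Fin n → K, (∀ l, l ∉ J → a l = 0) ∧ (∀ l, l ∉ J → b l = 0) ∧
      Fin.snoc a t + G *ᵥ Fin.snoc b 0 = d := by
  obtain ⟨a, b, ha, hb, h⟩ := hG.exists_add_mulVec_eq (T := J.map Fin.castSuccEmb)
    (by rw [card_map, hJ, Fintype.card_fin]) (d - Pi.single (Fin.last n) t)
  have hplayer (l : Fin n) (hl : l ∉ J) : l.castSucc ∉ J.map Fin.castSuccEmb :=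
    mt (mem_map' Fin.castSuccEmb).1 hl
  have hdealer : Fin.last n ∉ J.map Fin.castSuccEmb := by simp [Fin.castSucc_ne_last]
  have hinit (v : Fin (n + 1) → K) (hv : ∀ i ∉ J.map Fin.castSuccEmb, v i = 0) :
      (Fin.snoc (Fin.init v) 0 : Fin (n + 1) → K) = v := by
    rw [← hv _ hdealer, Fin.snoc_init_self]
  refine ⟨Fin.init a, Fin.init b, fun l hl => ha _ (hplayer l hl),
    fun l hl => hb _ (hplayer l hl), ?_⟩
  rw [snoc_eq_snoc_zero_add_single, hinit a ha, hinit b hb, add_right_comm, h, sub_add_cancel]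

variable [CommRing R] [NoZeroDivisors R] {G : Matrix (Fin (n + 1)) (Fin (n + 1)) R}

lemma eq_zero_of_snoc_add_mulVec_snoc_eq_zero (hG : HasNonsingularCuts G)
    (hJ : 2 * (#J + 1) ≤ n + 1) {a b : Fin n → R} (ha : ∀ l, l ∉ J → a l = 0)
    (hb : ∀ l, l ∉ J → b l = 0) {t s : R} (h : Fin.snoc a t + G *ᵥ Fin.snoc b s = 0) :
    t = 0 ∧ s = 0 := by
  have hcard : #(insert (Fin.last n) (J.map Fin.castSuccEmb)) ≤ #J + 1 :=
    (card_insert_le _ _).trans_eq (by rw [card_map])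
  obtain ⟨hat, hbs⟩ := hG.eq_zero_of_add_mulVec_eq_zero (by rw [Fintype.card_fin]; omega)
    (snoc_eq_zero_of_notMem ha t) (snoc_eq_zero_of_notMem hb s) h
  exact ⟨by simpa using congrFun hat (Fin.last n), by simpa using congrFun hbs (Fin.last n)⟩

lemma snoc_add_mulVec_snoc_zero_ne_col_last [Nontrivial R] (hG : HasNonsingularCuts G)
    (hJ : 2 * (#J + 1) ≤ n + 1) {a b : Fin n → R} (ha : ∀ l, l ∉ J → a l = 0)
    (hb : ∀ l, l ∉ J → b l = 0) :
    Fin.snoc a 0 + G *ᵥ Fin.snoc b 0 ≠ G.col (Fin.last n) := by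
  intro h
  have hmove : Fin.snoc a 0 + G *ᵥ Fin.snoc b (-1) = 0 := by
    rw [snoc_eq_snoc_zero_add_single b, mulVec_add, ← add_assoc, h, Pi.single_neg, mulVec_neg,
      mulVec_single_one, add_neg_cancel]
  exact neg_ne_zero.2 one_ne_zero (hG.eq_zero_of_snoc_add_mulVec_snoc_eq_zero hJ ha hb hmove).2

end HasNonsingularCuts

end Dealer

section CauchyGraph

variable {ι K : Type*} [DecidableEq ι] [Field K]

/-- The complete graph on `ι` whose edge between `i` and `j` has weight `(x i + x j)⁻¹`, as an
adjacency matrix. -/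
def cauchyGraph (x : ι → K) : Matrix ι ι K :=
  of fun i j => if i = j then 0 else (x i + x j)⁻¹

lemma cauchyGraph_isSymm (x : ι → K) : (cauchyGraph x).IsSymm := by
  ext i j
  simp [cauchyGraph, eq_comm, add_comm]

lemma cauchyGraph_apply_self (x : ι → K) (i : ι) : cauchyGraph x i i = 0 := if_pos rfl

lemma hasNonsingularCuts_cauchyGraph {x : ι → K} (hx : Function.Injective x)
    (hadd : Pairwise fun i j => x i + x j ≠ 0) : HasNonsingularCuts (cauchyGraph x) := by
  intro T r
  have hne (s t : T) : (r s : ι) ≠ t := fun h => (r s).2 (h ▸ t.2)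
  have hblock : (cauchyGraph x).submatrix (fun t => (r t : ι)) (Subtype.val : T → ι) =
      of fun s t : T => (x (r s) - -x t)⁻¹ := by
    ext s t
    simp [cauchyGraph, hne s t]
  rw [hblock]
  refine det_inv_sub_ne_zero (hx.comp (Subtype.val_injective.comp r.injective))
    (neg_injective.comp (hx.comp Subtype.val_injective)) fun s t h => hadd (hne s t) ?_
  exact eq_neg_iff_add_eq_zero.1 h

end CauchyGraph

lemma exists_injective_pairwise_add_ne_zero (A : Type*) [AddGroup A] [Infinite A] :
    ∃ x : ℕ → A, Function.Injective x ∧ Pairwise fun i j => x i + x j ≠ 0 := by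
  classical
  have : Std.Symm fun u v : A => u ≠ v ∧ u + v ≠ 0 :=
    ⟨fun _ _ h => ⟨h.1.symm, mt add_eq_zero_comm.1 h.2⟩⟩
  obtain ⟨x, -, hx⟩ := exists_seq_of_forall_finset_exists' (fun _ : A => True)
    (fun u v => u ≠ v ∧ u + v ≠ 0) fun s _ => by
      obtain ⟨v, hv⟩ := Infinite.exists_notMem_finset (s ∪ s.image Neg.neg)
      rw [notMem_union] at hv
      exact ⟨v, trivial, fun u hu => ⟨fun huv => hv.1 (huv ▸ hu), fun huv =>
        hv.2 (mem_image.2 ⟨u, hu, neg_eq_of_add_eq_zero_right huv⟩)⟩⟩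
  exact ⟨x, Function.injective_iff_pairwise_ne.2 fun i j hij => (hx hij).1,
    fun i j hij => (hx hij).2⟩

theorem stmt16_general (K : Type*) [Field K] [Infinite K] (k n : ℕ)
    (hk : 1 ≤ k) (hn : n = 2 * k - 1) :
    ∃ G : Matrix (Fin (n + 1)) (Fin (n + 1)) K,
      G.IsSymm ∧ (∀ i, G i i = 0) ∧
      (∀ J : Finset (Fin n), J.card = k →
        (∃ a b : Fin n → K,
          (∀ l, l ∉ J → a l = 0) ∧ (∀ l, l ∉ J → b l = 0) ∧
          Fin.snoc a 1 + G.mulVec (Fin.snoc b 0) = 0) ∧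
        (∃ a' b' : Fin n → K,
          (∀ l, l ∉ J → a' l = 0) ∧ (∀ l, l ∉ J → b' l = 0) ∧
          Fin.snoc a' 0 + G.mulVec (Fin.snoc b' 0) = (fun i => G i (Fin.last n)))) ∧
      (∀ J' : Finset (Fin n), J'.card < k →
        (¬ ∃ a b : Fin n → K,
          (∀ l, l ∉ J' → a l = 0) ∧ (∀ l, l ∉ J' → b l = 0) ∧
          Fin.snoc a 1 + G.mulVec (Fin.snoc b 0) = 0) ∧
        (¬ ∃ a' b' : Fin n → K,
          (∀ l, l ∉ J' → a' l = 0) ∧ (∀ l, l ∉ J' → b' l = 0) ∧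
          Fin.snoc a' 0 + G.mulVec (Fin.snoc b' 0) = (fun i => G i (Fin.last n)))) := by
  obtain ⟨x, hx, hadd⟩ := exists_injective_pairwise_add_ne_zero K
  let y : Fin (n + 1) → K := fun i => x i
  have hG : HasNonsingularCuts (cauchyGraph y) :=
    hasNonsingularCuts_cauchyGraph (hx.comp Fin.val_injective) fun _ _ hij =>
      hadd (Fin.val_ne_of_ne hij)
  refine ⟨cauchyGraph y, cauchyGraph_isSymm y, cauchyGraph_apply_self y,
    fun J hJ => ?_, fun J hJ => ?_⟩
  · have hhalf : 2 * #J = n + 1 := by omega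
    exact ⟨hG.exists_snoc_add_mulVec_snoc_zero_eq hhalf 1 0,
      hG.exists_snoc_add_mulVec_snoc_zero_eq hhalf 0 _⟩
  · have hhalf : 2 * (#J + 1) ≤ n + 1 := by omega
    exact ⟨fun ⟨a, b, ha, hb, h⟩ =>
        one_ne_zero (hG.eq_zero_of_snoc_add_mulVec_snoc_eq_zero hhalf ha hb h).1,
      fun ⟨a, b, ha, hb, h⟩ => hG.snoc_add_mulVec_snoc_zero_ne_col_last hhalf ha hb h⟩

/-- For every integer `k ≥ 1`, with `n = 2k − 1` and `N = {1,…,n}`, there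
exists a real symmetric `2k × 2k` matrix `G` with zero diagonal and last column `g` such that:
(i) every `J ⊆ N` with `|J| = k` admits `a, b ∈ ℝ^n` supported on `J` with
`(a;1) + G(b;0) = 0` and `a', b' ∈ ℝ^n` supported on `J` with `(a';0) + G(b';0) = g`; and
(ii) no `J' ⊆ N` with `|J'| < k` admits `a, b` supported on `J'` with `(a;1) + G(b;0) = 0`,
and no such `J'` admits `a', b'` supported on `J'` with `(a';0) + G(b';0) = g`. -/
theorem stmt16 (k n : ℕ) (hk : 1 ≤ k) (hn : n = 2 * k - 1) :
    ∃ G : Matrix (Fin (n + 1)) (Fin (n + 1)) ℝ,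
      G.IsSymm ∧ (∀ i, G i i = 0) ∧
      (∀ J : Finset (Fin n), J.card = k →
        (∃ a b : Fin n → ℝ,
          (∀ l, l ∉ J → a l = 0) ∧ (∀ l, l ∉ J → b l = 0) ∧
          Fin.snoc a 1 + G.mulVec (Fin.snoc b 0) = 0) ∧
        (∃ a' b' : Fin n → ℝ,
          (∀ l, l ∉ J → a' l = 0) ∧ (∀ l, l ∉ J → b' l = 0) ∧
          Fin.snoc a' 0 + G.mulVec (Fin.snoc b' 0) = (fun i => G i (Fin.last n)))) ∧
      (∀ J' : Finset (Fin n), J'.card < k →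
        (¬ ∃ a b : Fin n → ℝ,
          (∀ l, l ∉ J' → a l = 0) ∧ (∀ l, l ∉ J' → b l = 0) ∧
          Fin.snoc a 1 + G.mulVec (Fin.snoc b 0) = 0) ∧
        (¬ ∃ a' b' : Fin n → ℝ,
          (∀ l, l ∉ J' → a' l = 0) ∧ (∀ l, l ∉ J' → b' l = 0) ∧
          Fin.snoc a' 0 + G.mulVec (Fin.snoc b' 0) = (fun i => G i (Fin.last n)))) := by
  exact stmt16_general ℝ k n hk hn
end
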